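/- Let X be a path-connected metrizable ANR with basepoint x₀, n ∈ ℕ₀, and A ⊆ S_nX. Then cat_{S_n^*X}(A ∩ S_n^*X) ≤ SC_{n,X}(A) ≤ cat_{S_nX}(A). -/

import Mathlib

/-!
Both inequalities hold cover by cover.

If `s` is a sphere filling over `U ⊆ S_nX`, then for a based map `γ ∈ U` the straight-line
contraction of `B^{n+1}` onto `1_n` gives the homotopy `(t, p) ↦ s(γ)((1 - t) p + t 1_n)` from `γ`
to the constant map `x₀`. It fixes the value `x₀` at `1_n`, so it contracts `U ∩ S_n^*X` inside
`S_n^*X` (`isCatSet_of_isFillingDomain`).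

Conversely, let the inclusion of `U` into `S_nX` be homotopic to a constant map with value `γ₀`.
As `γ₀` is nullhomotopic, the evaluation `U × Sⁿ → X` is homotopic to a constant map. Such a
homotopy `F` descends along the quotient map `(t, p) ↦ (1 - t) p` from `[0,1] × Sⁿ` to `B^{n+1}`,
and this is a sphere filling over `U` (`isFillingDomain_of_isCatSet`).
-/

open Metric Set ContinuousMap
open scoped RealInnerProductSpace

noncomputable section

universe u

/-- The unit sphere `Sⁿ` in `ℝ^{n+1}`. -/
abbrev Sph (n : ℕ) : Set (EuclideanSpace ℝ (Fin (n + 1))) := Metric.sphere 0 1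

/-- The closed unit ball `B^{n+1}` in `ℝ^{n+1}`. -/
abbrev Ball (n : ℕ) : Set (EuclideanSpace ℝ (Fin (n + 1))) := Metric.closedBall 0 1

/-- `S_nX`: the space of nullhomotopic continuous maps `Sⁿ → X`, with the compact-open
topology (as a subspace of `C(Sⁿ, X)`). -/
abbrev SphereMaps (n : ℕ) (X : Type*) [TopologicalSpace X] : Type _ :=
  {f : C(↥(Sph n), X) // ∃ x : X, f.Homotopic (ContinuousMap.const _ x)}

/-- `B_{n+1}X`: the space of continuous maps `B^{n+1} → X` with the compact-open topology. -/
abbrev BallMaps (n : ℕ) (X : Type*) [TopologicalSpace X] : Type _ := C(↥(Ball n), X)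

/-- The inclusion `Sⁿ ↪ B^{n+1}`. -/
def sphIncl (n : ℕ) : C(↥(Sph n), ↥(Ball n)) :=
  ⟨fun p => ⟨p.1, sphere_subset_closedBall p.2⟩, (continuous_subtype_val.subtype_mk _)⟩

/-- A sphere filling over `A ⊆ S_nX`: a continuous map `s : A → B_{n+1}X` with
`s(γ)|_{Sⁿ} = γ` for all `γ ∈ A`. -/
def IsSphereFilling {n : ℕ} {X : Type*} [TopologicalSpace X]
    (A : Set (SphereMaps n X)) (s : C(↥A, BallMaps n X)) : Prop :=
  ∀ γ : ↥A, (s γ).comp (sphIncl n) = (γ : SphereMaps n X).1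

/-- A subset `A ⊆ S_nX` is a sphere filling domain if a sphere filling over `A` exists. -/
def IsFillingDomain {n : ℕ} {X : Type*} [TopologicalSpace X] (A : Set (SphereMaps n X)) : Prop :=
  ∃ s : C(↥A, BallMaps n X), IsSphereFilling A s

/-- The subspace spherical complexity `SC_{n,X}(A)`: the minimal number of sphere filling
domains, open in `S_nX`, needed to cover `A` (`⊤` if no finite cover exists;
the empty set gets the value `0`). -/
def SCsub (n : ℕ) (X : Type*) [TopologicalSpace X] (A : Set (SphereMaps n X)) : ℕ∞ :=
  sInf {k : ℕ∞ | ∃ m : ℕ, k = m ∧ ∃ U : Fin m → Set (SphereMaps n X),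
    (∀ i, IsOpen (U i) ∧ IsFillingDomain (U i)) ∧ A ⊆ ⋃ i, U i}

/-- The basepoint `1_n = (1,0,…,0)` of the sphere `Sⁿ`. -/
def basePt (n : ℕ) : ↥(Sph n) :=
  ⟨EuclideanSpace.single (0 : Fin (n + 1)) (1 : ℝ), by
    rw [mem_sphere_zero_iff_norm, EuclideanSpace.norm_single]; norm_num⟩

/-- `S_n^*X`: the subspace of `S_nX` of maps sending the basepoint `1_n` to `x₀`. -/
def BasedSphereMaps (n : ℕ) (X : Type*) [TopologicalSpace X] (x₀ : X) :
    Set (SphereMaps n X) :=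
  {f | f.1 (basePt n) = x₀}

/-- The inclusion map of a subset, as a continuous map. -/
def inclC {Y : Type*} [TopologicalSpace Y] (U : Set Y) : C(↥U, Y) :=
  ⟨Subtype.val, continuous_subtype_val⟩

/-- A subset of `Y` whose inclusion into `Y` is nullhomotopic. -/
def IsCatSet {Y : Type*} [TopologicalSpace Y] (U : Set Y) : Prop :=
  ∃ y : Y, (inclC U).Homotopic (ContinuousMap.const _ y)

/-- The Lusternik–Schnirelmann category of `Y`: the minimal number of open subsets with
nullhomotopic inclusion needed to cover `Y` (`⊤` if no finite cover exists). -/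
def LScat (Y : Type*) [TopologicalSpace Y] : ℕ∞ :=
  sInf {k : ℕ∞ | ∃ m : ℕ, k = m ∧ ∃ U : Fin m → Set Y,
    (∀ i, IsOpen (U i) ∧ IsCatSet (U i)) ∧ (⋃ i, U i) = univ}

/-- The subspace Lusternik–Schnirelmann category `cat_Y(A)`. -/
def LScatSub (Y : Type*) [TopologicalSpace Y] (A : Set Y) : ℕ∞ :=
  sInf {k : ℕ∞ | ∃ m : ℕ, k = m ∧ ∃ U : Fin m → Set Y,
    (∀ i, IsOpen (U i) ∧ IsCatSet (U i)) ∧ A ⊆ ⋃ i, U i}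

/-- A metrizable space `Y` is an absolute neighborhood retract (ANR) if for every metrizable
space `Z`, every closed subspace `C ⊆ Z` and every continuous `f : C → Y`, the map `f` admits
a continuous extension to an open neighborhood of `C` in `Z`. -/
def IsANR (Y : Type u) [TopologicalSpace Y] : Prop :=
  ∀ (Z : Type u) [TopologicalSpace Z] [TopologicalSpace.MetrizableSpace Z] (C : Set Z),
    IsClosed C → ∀ f : C(↥C, Y),
      ∃ (U : Set Z) (_ : IsOpen U) (hCU : C ⊆ U) (g : C(↥U, Y)),
        ∀ (z : Z) (hz : z ∈ C), g ⟨z, hCU hz⟩ = f ⟨z, hz⟩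

/-- The straight-line contraction `(t, p) ↦ (1 - t) p + t b` of the ball `B^{n+1}` onto `b`. -/
def ballSegment (n : ℕ) (b : ↥(Ball n)) : C(unitInterval × ↥(Ball n), ↥(Ball n)) where
  toFun x := ⟨(1 - (x.1 : ℝ)) • x.2.1 + (x.1 : ℝ) • b.1,
    (convex_closedBall _ _) x.2.2 b.2 (sub_nonneg.2 x.1.2.2) x.1.2.1 (by ring)⟩
  continuous_toFun := by fun_prop

lemma ballSegment_zero (n : ℕ) (b p : ↥(Ball n)) : ballSegment n b (0, p) = p := by
  ext; simp [ballSegment]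

lemma ballSegment_one (n : ℕ) (b p : ↥(Ball n)) : ballSegment n b (1, p) = b := by
  ext; simp [ballSegment]

lemma ballSegment_self (n : ℕ) (b : ↥(Ball n)) (t : unitInterval) :
    ballSegment n b (t, b) = b := by
  apply Subtype.ext
  simp [ballSegment, ← add_smul]

lemma homotopic_const_of_ball {n : ℕ} {X Y : Type*} [TopologicalSpace X] [TopologicalSpace Y]
    (f : C(↥(Ball n), X)) (g : C(Y, ↥(Ball n))) :
    ∃ x : X, (f.comp g).Homotopic (ContinuousMap.const _ x) := by
  refine ⟨f (sphIncl n (basePt n)), ⟨⟨⟨fun x => f (ballSegment n (sphIncl n (basePt n))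
    (x.1, g x.2)), by fun_prop⟩, fun y => ?_, fun y => ?_⟩⟩⟩
  · simp [ballSegment_zero]
  · simp [ballSegment_one]

/-- The based part of a sphere filling domain is contractible in `S_n^*X`. -/
lemma isCatSet_of_isFillingDomain {X : Type*} [TopologicalSpace X] (x₀ : X) (n : ℕ)
    (U : Set (SphereMaps n X)) (hU : IsFillingDomain U) :
    IsCatSet ((Subtype.val : ↥(BasedSphereMaps n X x₀) → SphereMaps n X) ⁻¹' U) := by
  obtain ⟨s, hs⟩ := hU
  set b := sphIncl n (basePt n) with hb
  let V : Set ↥(BasedSphereMaps n X x₀) := Subtype.val ⁻¹' U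
  let ι : V → U := fun v => ⟨v.1.1, v.2⟩
  have hι : Continuous ι := by fun_prop
  have hval (v : V) (p : ↥(Sph n)) : s (ι v) (sphIncl n p) = v.1.1.1 p :=
    congrArg (fun f : C(↥(Sph n), X) => f p) (hs (ι v))
  have hbase (v : V) : s (ι v) b = x₀ := (hval v (basePt n)).trans v.1.2
  let g : unitInterval → C(↥(Sph n), ↥(Ball n)) := fun t =>
    ⟨fun p => ballSegment n b (t, sphIncl n p), by fun_prop⟩
  let K : unitInterval × V → ↥(BasedSphereMaps n X x₀) := fun x =>
    ⟨⟨(s (ι x.2)).comp (g x.1), homotopic_const_of_ball _ _⟩, by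
      change s (ι x.2) (ballSegment n b (x.1, b)) = x₀
      rw [ballSegment_self, hbase]⟩
  have hK : Continuous K := by
    refine Continuous.subtype_mk (Continuous.subtype_mk ?_ _) _
    refine ContinuousMap.continuous_of_continuous_uncurry _ ?_
    change Continuous fun z : (unitInterval × V) × ↥(Sph n) =>
      s (ι z.1.2) (ballSegment n b (z.1.1, sphIncl n z.2))
    fun_prop
  refine ⟨⟨⟨ContinuousMap.const _ x₀, x₀, ContinuousMap.Homotopic.refl _⟩, rfl⟩,
    ⟨⟨⟨K, hK⟩, fun v => ?_, fun v => ?_⟩⟩⟩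
  · apply Subtype.ext; apply Subtype.ext; ext p
    change s (ι v) (ballSegment n b (0, sphIncl n p)) = v.1.1.1 p
    rw [ballSegment_zero, hval]
  · apply Subtype.ext; apply Subtype.ext; ext p
    change s (ι v) (ballSegment n b (1, sphIncl n p)) = x₀
    rw [ballSegment_one, hbase]

/-- The map `(t, p) ↦ (1 - t) p` exhibiting `B^{n+1}` as the cone over `Sⁿ`, with apex at `t = 1`. -/
def coneMap (n : ℕ) : C(unitInterval × ↥(Sph n), ↥(Ball n)) where
  toFun x := ⟨(1 - (x.1 : ℝ)) • x.2.1, by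
    have h1 := x.1.2.1
    have h2 := x.1.2.2
    rw [mem_closedBall_zero_iff, norm_smul, norm_eq_of_mem_sphere, Real.norm_eq_abs,
      abs_of_nonneg (by linarith)]
    linarith⟩
  continuous_toFun := by fun_prop

lemma norm_coneMap (n : ℕ) (x : unitInterval × ↥(Sph n)) : ‖(coneMap n x).1‖ = 1 - (x.1 : ℝ) := by
  change ‖(1 - (x.1 : ℝ)) • x.2.1‖ = _
  rw [norm_smul, norm_eq_of_mem_sphere, Real.norm_eq_abs, abs_of_nonneg (sub_nonneg.2 x.1.2.2),
    mul_one]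

lemma coneMap_surjective (n : ℕ) : Function.Surjective (coneMap n) := by
  intro y
  have hy : ‖y.1‖ ≤ 1 := mem_closedBall_zero_iff.1 y.2
  by_cases h0 : y.1 = 0
  · refine ⟨(1, basePt n), Subtype.ext ?_⟩
    simp [coneMap, h0]
  · have hn : ‖y.1‖ ≠ 0 := norm_ne_zero_iff.2 h0
    refine ⟨(⟨1 - ‖y.1‖, by linarith, by linarith [norm_nonneg y.1]⟩, ⟨‖y.1‖⁻¹ • y.1, ?_⟩),
      Subtype.ext ?_⟩
    · rw [mem_sphere_zero_iff_norm, norm_smul, norm_inv, norm_norm, inv_mul_cancel₀ hn]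
    · simp [coneMap, smul_smul, mul_inv_cancel₀ hn]

/-- The only identification made by `coneMap` is the collapse of `{1} × Sⁿ`. -/
lemma coneMap_eq {n : ℕ} {x y : unitInterval × ↥(Sph n)} (h : coneMap n x = coneMap n y) :
    x = y ∨ (x.1 = 1 ∧ y.1 = 1) := by
  have ht : x.1 = y.1 := by
    have := norm_coneMap n x
    rw [h, norm_coneMap] at this
    exact Subtype.ext (by linarith)
  by_cases h1 : x.1 = 1
  · exact Or.inr ⟨h1, ht ▸ h1⟩
  · refine Or.inl (Prod.ext ht (Subtype.ext ?_))
    have hne : 1 - (x.1 : ℝ) ≠ 0 := fun h0 =>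
      h1 (Subtype.ext (sub_eq_zero.1 h0).symm)
    have h2 : (1 - (x.1 : ℝ)) • x.2.1 = (1 - (y.1 : ℝ)) • y.2.1 := congrArg Subtype.val h
    rw [← ht] at h2
    exact smul_right_injective _ hne h2

/-- A subset of `S_nX` with nullhomotopic inclusion into `S_nX` is a sphere filling domain. -/
lemma isFillingDomain_of_isCatSet {X : Type*} [TopologicalSpace X] (n : ℕ)
    (U : Set (SphereMaps n X)) (hU : IsCatSet U) : IsFillingDomain U := by
  obtain ⟨⟨γ₀, x, hx⟩, ⟨H⟩⟩ := hU
  let ev : C(↥U × ↥(Sph n), X) := ⟨fun z => z.1.1.1 z.2, by fun_prop⟩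
  have h1 : ev.Homotopic (γ₀.comp ContinuousMap.snd) := by
    refine ⟨⟨⟨fun z => (H (z.1, z.2.1)).1 z.2.2, by fun_prop⟩, fun z => ?_, fun z => ?_⟩⟩
    · change (H (0, z.1)).1 z.2 = z.1.1.1 z.2
      rw [H.apply_zero]
      rfl
    · simp
  have h2 : (γ₀.comp ContinuousMap.snd).Homotopic
      (ContinuousMap.const (↥U × ↥(Sph n)) x) := by
    obtain ⟨G⟩ := hx
    refine ⟨⟨⟨fun z => G (z.1, z.2.2), by fun_prop⟩, fun z => ?_, fun z => ?_⟩⟩ <;> simp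
  obtain ⟨F⟩ := h1.trans h2
  let Fc : ↥U × (unitInterval × ↥(Sph n)) → X := fun z => F (z.2.1, (z.1, z.2.2))
  have hFc : Continuous Fc := by fun_prop
  have hwd (γ : ↥U) {y z : unitInterval × ↥(Sph n)} (h : coneMap n y = coneMap n z) :
      Fc (γ, y) = Fc (γ, z) := by
    rcases coneMap_eq h with rfl | ⟨hy, hz⟩
    · rfl
    · simp [Fc, hy, hz]
  -- `U` need not be locally compact; properness of `coneMap` makes `id × coneMap` closed anyway.
  have hq : Topology.IsQuotientMap (Prod.map (id : ↥U → ↥U) (coneMap n)) :=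
    (isProperMap_id.prodMap (coneMap n).continuous.isProperMap).isClosedMap.isQuotientMap
      (by fun_prop) (Function.surjective_id.prodMap (coneMap_surjective n))
  let σ := Function.surjInv (coneMap_surjective n)
  have hσ (y : ↥(Ball n)) : coneMap n (σ y) = y := Function.surjInv_eq _ y
  have hg : Continuous fun z : ↥U × ↥(Ball n) => Fc (z.1, σ z.2) := by
    rw [hq.continuous_iff]
    convert hFc using 1
    ext z
    exact hwd z.1 (hσ _)
  refine ⟨ContinuousMap.curry ⟨_, hg⟩, fun γ => ?_⟩
  ext p
  change Fc (γ, σ (sphIncl n p)) = γ.1.1 p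
  have h0 : coneMap n (0, p) = sphIncl n p := by
    apply Subtype.ext; simp [coneMap, sphIncl]
  rw [hwd γ ((hσ _).trans h0.symm)]
  simp [Fc, ev]

/-- in a path-connected metrizable ANR,
`cat_{S_n^*X}(A ∩ S_n^*X) ≤ SC_{n,X}(A) ≤ cat_{S_nX}(A)`. -/
theorem catSub_le_SCsub_le_catSub {X : Type u} [TopologicalSpace X] [PathConnectedSpace X]
    [TopologicalSpace.MetrizableSpace X] (hX : IsANR X) (x₀ : X) (n : ℕ)
    (A : Set (SphereMaps n X)) :
    LScatSub ↥(BasedSphereMaps n X x₀) (Subtype.val ⁻¹' A) ≤ SCsub n X A ∧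
      SCsub n X A ≤ LScatSub (SphereMaps n X) A := by
  constructor
  · refine le_sInf ?_
    rintro _ ⟨m, rfl, U, hU, hA⟩
    refine sInf_le ⟨m, rfl, fun i => Subtype.val ⁻¹' U i, fun i =>
      ⟨(hU i).1.preimage continuous_subtype_val,
        isCatSet_of_isFillingDomain x₀ n _ (hU i).2⟩, ?_⟩
    rw [← preimage_iUnion]
    exact preimage_mono hA
  · refine le_sInf ?_
    rintro _ ⟨m, rfl, U, hU, hA⟩
    exact sInf_le ⟨m, rfl, U, fun i =>
      ⟨(hU i).1, isFillingDomain_of_isCatSet n _ (hU i).2⟩, hA⟩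

end
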